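/- For any number n of agents with additive utilities over a finite set M of indivisible chores (every agent values every item strictly negatively) and with utilities over the cake C = [0,1] given by nonnegative integrable density functions, there exists an allocation {(A_i, C_i)}_{i∈N} of the chores and the cake that is EFM. -/

import Mathlib

open MeasureTheory

/-- weight of a path -/
def pathW {n : ℕ} (w : Fin n → Fin n → ℝ) : Fin n → List (Fin n) → ℝ
  | _, [] => 0
  | i, j :: L => w i j + pathW w j L

lemma pathW_append {n : ℕ} (w : Fin n → Fin n → ℝ) (i k : Fin n) (L1 L2 : List (Fin n)) :
    pathW w i (L1 ++ k :: L2) = pathW w i (L1 ++ [k]) + pathW w k L2 := by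
  induction L1 generalizing i with
  | nil => simp [pathW]
  | cons a L ih => simp [pathW, ih a, add_assoc]

lemma pathW_zip {n : ℕ} (w : Fin n → Fin n → ℝ) (i k : Fin n) (L : List (Fin n)) :
    pathW w i (L ++ [k]) = (List.zipWith w (i :: L) (L ++ [k])).sum := by
  induction L generalizing i with
  | nil => simp [pathW]
  | cons a L ih => simp [pathW, ih a]

lemma cycle_sum {n : ℕ} (w : Fin n → Fin n → ℝ) (hw : ∀ i, w i i = 0)
    (i : Fin n) (L : List (Fin n)) (hL : (i :: L).Nodup) :
    pathW w i (L ++ [i]) = ∑ k, w k ((i :: L).formPerm k) := by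
  have h1 : (i :: L).map ((i :: L).formPerm) = L ++ [i] := by
    have : L ++ [i] = (i :: L).rotate 1 := by simp
    rw [this]
    apply List.ext_getElem
    · simp
    · intro m h1 h2
      rw [List.getElem_map, List.getElem_rotate, List.formPerm_apply_getElem _ hL]
  rw [pathW_zip, ← h1, List.zipWith_map_right, List.zipWith_self]
  rw [← List.sum_toFinset _ hL]
  apply Finset.sum_subset (Finset.subset_univ _)
  intro x _ hx
  rw [List.formPerm_apply_of_notMem (by simpa using hx), hw]

lemma exists_potential {n : ℕ} (w : Fin n → Fin n → ℝ) (hw : ∀ i, w i i = 0)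
    (hp : ∀ σ : Equiv.Perm (Fin n), ∑ k, w k (σ k) ≤ 0) :
    ∃ p : Fin n → ℝ, ∀ i j, w i j + p j ≤ p i := by
  have hmax : ∀ i, ∃ L : List (Fin n), (i :: L).Nodup ∧
      ∀ L', (i :: L').Nodup → pathW w i L' ≤ pathW w i L := by
    intro i
    have hfin : Set.Finite {L : List (Fin n) | (i :: L).Nodup} := by
      apply (List.finite_length_le (Fin n) n).subset
      intro L hL
      have := List.Nodup.length_le_card hL
      simp at this ⊢
      omega
    obtain ⟨L, hL, h⟩ := Set.exists_max_image _ (pathW w i) hfin ⟨[], by simp⟩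
    exact ⟨L, hL, fun L' h' => h L' h'⟩
  choose L hL hLm using hmax
  refine ⟨fun i => pathW w i (L i), fun i j => ?_⟩
  by_cases hij : i = j
  · subst hij; simp [hw]
  by_cases hi : i ∈ L j
  · obtain ⟨L1, L2, h12⟩ := List.append_of_mem hi
    have hn := hL j
    rw [h12] at hn
    have hc : (i :: j :: L1).Nodup := by
      simp [List.nodup_append] at hn ⊢
      grind
    have h2 : (i :: L2).Nodup := by
      simp [List.nodup_append] at hn ⊢
      grind
    have e1 := cycle_sum w hw i _ hc
    have e2 := hp ((i :: j :: L1).formPerm)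
    have e3 := hLm i L2 h2
    simp only [List.cons_append, pathW] at e1
    simp only [h12]
    rw [pathW_append]
    linarith
  · exact hLm i (j :: L j) (by
      have := hL j
      simp at this ⊢
      tauto)

lemma rounds {n : ℕ} {J : Type} [DecidableEq J] (v : Fin n → J → ℝ) (R : ℕ) :
    ∀ S : Finset J, S.card = R * n → ∃ A : Fin n → Finset J,
      (∀ i j, i ≠ j → Disjoint (A i) (A j)) ∧ (Finset.univ.biUnion A = S) ∧
      (∀ σ : Equiv.Perm (Fin n), ∑ i, ∑ t ∈ A (σ i), v i t ≤ ∑ i, ∑ t ∈ A i, v i t) ∧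
      (R ≠ 0 → ∀ i j, ∃ l ∈ A i, ∃ g ∈ A j,
        ∑ t ∈ (A j).erase g, v i t ≤ ∑ t ∈ (A i).erase l, v i t) := by
  induction R with
  | zero =>
    intro S hS
    have : S = ∅ := by simpa using hS
    subst this
    exact ⟨fun _ => ∅, by simp, by ext; simp, by simp, by simp⟩
  | succ R ih =>
    intro S hS
    have hne : Nonempty (Fin n ↪ S) := by
      apply Function.Embedding.nonempty_of_card_le
      simp [hS, add_mul]
    obtain ⟨m, hm⟩ := Finite.exists_max (fun m : Fin n ↪ S => ∑ i, v i (m i))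
    have hinj : ∀ i j, (m i : J) = m j → i = j := fun i j h => m.injective (Subtype.ext h)
    set K : Finset J := Finset.univ.image (fun i => (m i : J)) with hK
    have hKc : K.card = n := by
      rw [hK, Finset.card_image_of_injective _ (fun i j h => hinj i j h)]; simp
    have hKS : K ⊆ S := by
      intro t ht
      simp only [hK, Finset.mem_image] at ht
      obtain ⟨i, _, rfl⟩ := ht
      exact (m i).2
    have hmK : ∀ i, (m i : J) ∈ K := fun i => by simp [hK]
    obtain ⟨A, hd, hU, hσ, hE⟩ := ih (S \ K) (by
      rw [Finset.card_sdiff_of_subset hKS, hS, hKc, add_mul]; simp)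
    have hsub : ∀ i, ∀ t ∈ A i, t ∈ S ∧ t ∉ K := by
      intro i t ht
      have : t ∈ S \ K := hU ▸ Finset.mem_biUnion.2 ⟨i, Finset.mem_univ _, ht⟩
      simpa using this
    have hnot : ∀ i j, (m i : J) ∉ A j := fun i j h => (hsub j _ h).2 (hmK i)
    have hbest : ∀ i t, t ∈ S → t ∉ K → v i t ≤ v i (m i) := by
      intro i t ht hK'
      have hi : Function.Injective (Function.update (fun k => m k) i ⟨t, ht⟩) := by
        intro a b hab
        have hne : ∀ c, m c ≠ ⟨t, ht⟩ := fun c h => hK' (by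
          have := hmK c; rw [h] at this; exact this)
        by_cases ha : a = i <;> by_cases hb : b = i
        · rw [ha, hb]
        · subst ha; simp [Function.update_of_ne hb] at hab; exact absurd hab.symm (hne b)
        · subst hb; simp [Function.update_of_ne ha] at hab; exact absurd hab (hne a)
        · simp [Function.update_of_ne ha, Function.update_of_ne hb] at hab; exact hab
      have h := hm ⟨_, hi⟩
      simp only [Function.Embedding.coeFn_mk] at h
      rw [← Finset.add_sum_erase _ _ (Finset.mem_univ i),
        ← Finset.add_sum_erase _ (fun i => v i (m i)) (Finset.mem_univ i)] at h
      have e : ∑ x ∈ Finset.univ.erase i, v x (Function.update (fun k => m k) i ⟨t, ht⟩ x)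
          = ∑ x ∈ Finset.univ.erase i, v x (m x) := by
        apply Finset.sum_congr rfl
        intro x hx
        rw [Function.update_of_ne (Finset.ne_of_mem_erase hx)]
      rw [e] at h
      simp only [Function.update_self] at h
      linarith
    have hperm : ∀ σ : Equiv.Perm (Fin n), ∑ i, v i (m (σ i)) ≤ ∑ i, v i (m i) := by
      intro σ
      exact hm (σ.toEmbedding.trans m)
    refine ⟨fun i => insert (m i : J) (A i), ?_, ?_, ?_, ?_⟩
    · intro i j hij
      simp only [Finset.disjoint_insert_left, Finset.disjoint_insert_right, Finset.mem_insert]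
      refine ⟨?_, hnot i j, hd i j hij⟩
      rintro (h | h)
      · exact hij (hinj _ _ h.symm)
      · exact hnot j i h
    · ext t
      have : t ∈ Finset.univ.biUnion A ↔ t ∈ S \ K := by rw [hU]
      simp only [Finset.mem_biUnion, Finset.mem_univ, true_and, Finset.mem_sdiff,
        Finset.mem_insert] at this ⊢
      constructor
      · rintro ⟨i, rfl | h⟩
        · exact (m i).2
        · exact (hsub i t h).1
      · intro ht
        by_cases hk : t ∈ K
        · simp only [hK, Finset.mem_image] at hk
          obtain ⟨i, _, rfl⟩ := hk
          exact ⟨i, Or.inl rfl⟩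
        · obtain ⟨i, hi⟩ := this.2 ⟨ht, hk⟩
          exact ⟨i, Or.inr hi⟩
    · intro σ
      simp only [Finset.sum_insert (hnot _ _), Finset.sum_add_distrib]
      exact add_le_add (hperm σ) (hσ σ)
    · intro _ i j
      by_cases hR : R = 0
      · subst hR
        have hemp : S \ K = ∅ := by
          rw [← Finset.card_eq_zero, Finset.card_sdiff_of_subset hKS, hS, hKc]; simp
        have hA : ∀ i, A i = ∅ := by
          intro i
          rw [Finset.eq_empty_iff_forall_notMem]
          intro t ht
          have := hsub i t ht
          have h2 : t ∈ S \ K := by simpa using this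
          simp [hemp] at h2
        exact ⟨m i, by simp, m j, by simp, by simp [hA]⟩
      · obtain ⟨l, hl, g, hg, h⟩ := hE hR i j
        refine ⟨l, by simp [hl], m j, by simp, ?_⟩
        rw [Finset.erase_insert (hnot _ _)]
        rw [Finset.erase_insert_of_ne (by rintro rfl; exact hnot _ _ hl),
          Finset.sum_insert (fun h => hnot _ _ (Finset.mem_of_mem_erase h))]
        rw [← Finset.add_sum_erase _ _ hg]
        exact add_le_add (hbest i g (hsub j g hg).1 (hsub j g hg).2) h

/-- An EF1 and envy-freeable allocation of the chores. -/
lemma chores_alloc {n : ℕ} (hn : 0 < n) {I : Type} [Fintype I] [DecidableEq I]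
    (v : Fin n → I → ℝ) (hv : ∀ i t, v i t ≤ 0) :
    ∃ A : Fin n → Finset I,
      (∀ i j, i ≠ j → Disjoint (A i) (A j)) ∧ (Finset.univ.biUnion A = Finset.univ) ∧
      (∀ σ : Equiv.Perm (Fin n), ∑ i, ∑ t ∈ A (σ i), v i t ≤ ∑ i, ∑ t ∈ A i, v i t) ∧
      (∀ i j, ∑ t ∈ A j, v i t ≤ ∑ t ∈ A i, v i t ∨
        ∃ l ∈ A i, ∑ t ∈ A j, v i t ≤ ∑ t ∈ (A i).erase l, v i t) := by
  classical
  obtain ⟨B, hd, hU, hσ, hE⟩ := rounds (n := n) (J := I ⊕ Fin (Fintype.card I * (n - 1)))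
    (fun i => Sum.elim (v i) (fun _ => 0)) (Fintype.card I) Finset.univ (by
      rw [Finset.card_univ, Fintype.card_sum, Fintype.card_fin]
      obtain ⟨k, rfl⟩ : ∃ k, n = k + 1 := ⟨n - 1, by omega⟩
      simp; ring)
  have hsum : ∀ (T : Finset (I ⊕ Fin (Fintype.card I * (n - 1)))) i,
      ∑ t ∈ T, Sum.elim (v i) (fun _ => (0 : ℝ)) t = ∑ t ∈ T.toLeft, v i t := by
    intro T i
    conv_lhs => rw [← Finset.toLeft_disjSum_toRight (u := T)]
    rw [Finset.sum_disjSum]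
    simp
  refine ⟨fun i => (B i).toLeft, ?_, ?_, ?_, ?_⟩
  · intro i j hij
    rw [Finset.disjoint_left]
    intro t h1 h2
    simp only [Finset.mem_toLeft] at h1 h2
    exact Finset.disjoint_left.1 (hd i j hij) h1 h2
  · ext t
    have : Sum.inl t ∈ Finset.univ.biUnion B := by rw [hU]; simp
    simpa using this
  · intro σ
    simpa only [hsum] using hσ σ
  · intro i j
    by_cases hI : Fintype.card I = 0
    · left
      have := Fintype.card_eq_zero_iff.1 hI
      simp [Subsingleton.elim ((B i).toLeft) ((B j).toLeft)]
    obtain ⟨l, hl, g, hg, h⟩ := hE hI i j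
    have hj : ∑ t ∈ B j, Sum.elim (v i) (fun _ => (0 : ℝ)) t ≤
        ∑ t ∈ (B j).erase g, Sum.elim (v i) (fun _ => (0 : ℝ)) t := by
      rw [← Finset.add_sum_erase _ _ hg]
      have : Sum.elim (v i) (fun _ => (0 : ℝ)) g ≤ 0 := by
        cases g <;> simp [hv]
      linarith
    have h3 := hj.trans h
    rw [hsum] at h3
    cases l with
    | inl l =>
      right
      refine ⟨l, by simpa using hl, ?_⟩
      rw [hsum] at h3
      have e : ((B i).toLeft).erase l = ((B i).erase (Sum.inl l)).toLeft := by
        ext x; simp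
      rw [← e] at h3
      exact h3
    | inr l =>
      left
      refine h3.trans (le_of_eq ?_)
      rw [← hsum, ← Finset.add_sum_erase _ _ hl]
      simp

/-- every measurable set can be halved simultaneously for all measures -/
def HalfP (M : Set (Measure ℝ)) : Prop :=
  ∀ X : Set ℝ, MeasurableSet X → ∃ Y, Y ⊆ X ∧ MeasurableSet Y ∧ ∀ μ ∈ M, μ.real Y = μ.real X / 2

def FamP (M : Set (Measure ℝ)) : Prop :=
  ∀ X : Set ℝ, MeasurableSet X → ∃ F : ℝ → Set ℝ,
    (∀ s t, 0 ≤ s → s ≤ t → t ≤ 1 → F s ⊆ F t) ∧ F 0 = ∅ ∧ F 1 = X ∧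
    (∀ t, MeasurableSet (F t)) ∧
    ∀ μ ∈ M, ∀ t, 0 ≤ t → t ≤ 1 → μ.real (F t) = t * μ.real X

open Classical in
/-- dyadic subdivision -/
noncomputable def dyad (h : Set ℝ → Set ℝ) (X : Set ℝ) : ℕ → ℕ → Set ℝ
  | 0, m => if m = 0 then ∅ else X
  | k + 1, m => dyad h X k (m / 2) ∪
      (if m % 2 = 1 then h (dyad h X k (m / 2 + 1) \ dyad h X k (m / 2)) else ∅)

lemma half_fam (M : Set (Measure ℝ)) (hM : ∀ μ ∈ M, IsFiniteMeasure μ) (H : HalfP M) :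
    FamP M := by
  classical
  intro X hX
  have H' : ∀ Z : Set ℝ, ∃ Y, Y ⊆ Z ∧ (MeasurableSet Z → (MeasurableSet Y ∧
      ∀ μ ∈ M, μ.real Y = μ.real Z / 2)) := by
    intro Z
    by_cases hZ : MeasurableSet Z
    · obtain ⟨Y, h1, h2, h3⟩ := H Z hZ
      exact ⟨Y, h1, fun _ => ⟨h2, h3⟩⟩
    · exact ⟨∅, by simp, fun h => absurd h hZ⟩
  choose h hsub hh using H'
  set D := dyad h X with hD
  have D0 : ∀ m, D 0 m = if m = 0 then ∅ else X := fun m => rfl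
  have Ds : ∀ k m, D (k+1) m = D k (m / 2) ∪
      (if m % 2 = 1 then h (D k (m / 2 + 1) \ D k (m / 2)) else ∅) := fun k m => rfl
  have De : ∀ k m, D (k+1) (2 * m) = D k m := by
    intro k m
    rw [Ds]; simp
  have Do : ∀ k m, D (k+1) (2 * m + 1) = D k m ∪ h (D k (m + 1) \ D k m) := by
    intro k m
    rw [Ds]
    have e1 : (2 * m + 1) / 2 = m := by omega
    have e2 : (2 * m + 1) % 2 = 1 := by omega
    rw [e1, e2]; simp
  have hcase : ∀ m : ℕ, ∃ q, m = 2 * q ∨ m = 2 * q + 1 := fun m => ⟨m / 2, by omega⟩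
  have Dmeas : ∀ k m, MeasurableSet (D k m) := by
    intro k
    induction k with
    | zero => intro m; rw [D0]; split_ifs <;> simp [hX]
    | succ k ih =>
      intro m
      obtain ⟨q, rfl | rfl⟩ := hcase m
      · rw [De]; exact ih q
      · rw [Do]; exact (ih q).union (hh _ ((ih _).diff (ih _))).1
  have Dstep : ∀ k m, D k m ⊆ D k (m + 1) := by
    intro k
    induction k with
    | zero => intro m; rw [D0, D0]; split_ifs <;> simp_all
    | succ k ih =>
      intro m
      obtain ⟨q, rfl | rfl⟩ := hcase m
      · rw [De, Do]; exact Set.subset_union_left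
      · rw [Do, show 2 * q + 1 + 1 = 2 * (q + 1) by ring, De]
        exact Set.union_subset (ih q) ((hsub _).trans Set.sdiff_subset)
  have Dmono : ∀ k, Monotone (D k) := fun k => monotone_nat_of_le_succ (Dstep k)
  have Dzero : ∀ k, D k 0 = ∅ := by
    intro k
    induction k with
    | zero => simp [D0]
    | succ k ih => have := De k 0; simpa [ih] using this
  have Dtop : ∀ k, D k (2 ^ k) = X := by
    intro k
    induction k with
    | zero => simp [D0]
    | succ k ih => rw [pow_succ', De, ih]
  have Dval : ∀ μ ∈ M, ∀ k m, m ≤ 2 ^ k → μ.real (D k m) = (m : ℝ) / 2 ^ k * μ.real X := by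
    intro μ hμ k
    have := hM μ hμ
    induction k with
    | zero =>
      intro m hm
      have : m = 0 ∨ m = 1 := by simp at hm; omega
      rcases this with rfl | rfl <;> simp [D0]
    | succ k ih =>
      intro m hm
      obtain ⟨q, rfl | rfl⟩ := hcase m
      · rw [De, ih q (by rw [pow_succ] at hm; omega)]
        push_cast; field_simp
        ring
      · have hq : q + 1 ≤ 2 ^ k := by rw [pow_succ] at hm; omega
        have hm2 := hh _ ((Dmeas k (q + 1)).diff (Dmeas k q))
        rw [Do, measureReal_union ?_ hm2.1, hm2.2 μ hμ,
          measureReal_sdiff (Dstep k q) (Dmeas k q), ih q (by omega), ih (q + 1) hq]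
        · push_cast; field_simp
          ring
        · exact Set.disjoint_of_subset_right (hsub _) Set.disjoint_sdiff_right
  have hfl : ∀ (t : ℝ) (k : ℕ), 2 * ⌊t * 2 ^ k⌋₊ ≤ ⌊t * 2 ^ (k + 1)⌋₊ := by
    intro t k
    by_cases ht : 0 ≤ t
    · apply Nat.le_floor
      push_cast
      have := Nat.floor_le (a := t * 2 ^ k) (by positivity)
      rw [pow_succ]; nlinarith
    · have : ⌊t * 2 ^ k⌋₊ = 0 := Nat.floor_of_nonpos (by
        push Not at ht
        exact mul_nonpos_of_nonpos_of_nonneg ht.le (by positivity))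
      omega
  have hmonok : ∀ t : ℝ, Monotone (fun k => D k ⌊t * 2 ^ k⌋₊) := by
    intro t
    apply monotone_nat_of_le_succ
    intro k
    change D k _ ⊆ D (k+1) _
    rw [← De]
    exact Dmono _ (hfl t k)
  refine ⟨fun t => ⋃ k, D k ⌊t * 2 ^ k⌋₊, ?_, ?_, ?_, ?_, ?_⟩
  · intro s t hs hst _
    apply Set.iUnion_mono
    intro k
    apply Dmono
    apply Nat.floor_mono
    gcongr
  · simp [Dzero]
  · have : ∀ k : ℕ, ⌊(1 : ℝ) * 2 ^ k⌋₊ = 2 ^ k := by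
      intro k
      rw [one_mul]
      have := Nat.floor_natCast (R := ℝ) (2 ^ k)
      simpa using this
    simp only [this, Dtop, Set.iUnion_const]
  · intro t
    exact MeasurableSet.iUnion fun k => Dmeas _ _
  · intro μ hμ t ht0 ht1
    have := hM μ hμ
    have h1 : Filter.Tendsto (fun k => μ.real (D k ⌊t * 2 ^ k⌋₊)) Filter.atTop
        (nhds (μ.real (⋃ k, D k ⌊t * 2 ^ k⌋₊))) := by
      have := tendsto_measure_iUnion_atTop (μ := μ) (hmonok t)
      exact (ENNReal.tendsto_toReal (measure_ne_top _ _)).comp this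
    have h2 : Filter.Tendsto (fun k => μ.real (D k ⌊t * 2 ^ k⌋₊)) Filter.atTop
        (nhds (t * μ.real X)) := by
      have e : ∀ k : ℕ, μ.real (D k ⌊t * 2 ^ k⌋₊) = (⌊t * 2 ^ k⌋₊ : ℝ) / 2 ^ k * μ.real X := by
        intro k
        apply Dval μ hμ
        have : ⌊t * (2:ℝ) ^ k⌋₊ ≤ ⌊((2 ^ k : ℕ) : ℝ)⌋₊ := by
          apply Nat.floor_mono
          push_cast
          have : (0:ℝ) < 2 ^ k := by positivity
          nlinarith
        rwa [Nat.floor_natCast] at this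
      simp_rw [e]
      apply Filter.Tendsto.mul_const
      have := (tendsto_nat_floor_mul_div_atTop (R := ℝ) ht0).comp
        (tendsto_pow_atTop_atTop_of_one_lt (r := (2:ℝ)) (by norm_num))
      exact this
    exact tendsto_nhds_unique h1 h2

lemma fam_half (M : Set (Measure ℝ)) (hM : ∀ μ ∈ M, IsFiniteMeasure μ) (ν μ : Measure ℝ)
    (hν : ν ∈ M) [IsFiniteMeasure μ] (hle : μ ≤ ν) (H : FamP M) : HalfP (insert μ M) := by
  intro X hX
  obtain ⟨F, hmono, h0, h1, hmeas, hval⟩ := H X hX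
  have := hM ν hν
  have hdiff : ∀ (κ : Measure ℝ) [IsFiniteMeasure κ] s t, 0 ≤ s → s ≤ t → t ≤ 1 →
      κ.real (F t \ F s) = κ.real (F t) - κ.real (F s) := by
    intro κ _ s t hs hst ht
    rw [measureReal_sdiff (hmono s t hs hst ht) (hmeas s)]
  have hlip : ∀ s t, 0 ≤ s → s ≤ t → t ≤ 1 →
      0 ≤ μ.real (F t) - μ.real (F s) ∧ 
      μ.real (F t) - μ.real (F s) ≤ (t - s) * ν.real X := by
    intro s t hs hst ht
    constructor
    · rw [← hdiff μ s t hs hst ht]; exact measureReal_nonneg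
    · have e := hdiff ν s t hs hst ht
      rw [hval ν hν t (by linarith) ht, hval ν hν s hs (by linarith)] at e
      rw [← hdiff μ s t hs hst ht]
      calc μ.real (F t \ F s) ≤ ν.real (F t \ F s) :=
            ENNReal.toReal_mono (measure_ne_top _ _) (hle _)
        _ = _ := by rw [e]; ring
  have hcont : ContinuousOn (fun t => μ.real (F t)) (Set.Icc 0 1) := by
    have : LipschitzOnWith (Real.toNNReal (ν.real X)) (fun t => μ.real (F t)) (Set.Icc 0 1) := by
      apply LipschitzOnWith.of_dist_le_mul
      intro s hs t ht
      rw [Real.coe_toNNReal _ measureReal_nonneg, Real.dist_eq, Real.dist_eq]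
      rcases le_total s t with hst | hst
      · have := hlip s t hs.1 hst ht.2
        rw [abs_sub_comm, abs_of_nonneg this.1, abs_sub_comm, abs_of_nonneg (by linarith)]
        linarith [this.2]
      · have := hlip t s ht.1 hst hs.2
        rw [abs_of_nonneg this.1, abs_of_nonneg (by linarith)]
        linarith [this.2]
    exact this.continuousOn
  have hg : ContinuousOn (fun t => μ.real (F (t + 1/2)) - μ.real (F t)) (Set.Icc 0 (1/2)) := by
    apply ContinuousOn.sub
    · apply hcont.comp (f := fun t : ℝ => t + 1/2) (by fun_prop)
      intro t ht
      constructor <;> linarith [ht.1, ht.2]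
    · exact hcont.mono (Set.Icc_subset_Icc le_rfl (by norm_num))
  have hex : ∃ t ∈ Set.Icc (0:ℝ) (1/2), μ.real (F (t + 1/2)) - μ.real (F t) = μ.real X / 2 := by
    have e0 : μ.real (F (0 + 1/2)) - μ.real (F 0) = μ.real (F (1/2)) := by simp [h0]
    have e1 : μ.real (F (1/2 + 1/2)) - μ.real (F (1/2)) = μ.real X - μ.real (F (1/2)) := by
      norm_num [h1]
    rcases le_total (μ.real (F (1/2))) (μ.real X / 2) with hc | hc
    · exact intermediate_value_Icc (by norm_num) hg ⟨by linarith, by linarith⟩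
    · exact intermediate_value_Icc' (by norm_num) hg ⟨by linarith, by linarith⟩
  obtain ⟨t, ht, het⟩ := hex
  have ht0 := ht.1
  have ht1 := ht.2
  refine ⟨F (t + 1/2) \ F t, ?_, (hmeas _).diff (hmeas _), ?_⟩
  · rw [← h1]
    exact Set.sdiff_subset.trans (hmono _ _ (by linarith) (by linarith) le_rfl)
  · rintro κ (rfl | hκ)
    · rw [hdiff κ _ _ ht0 (by linarith) (by linarith), het]
    · have := hM κ hκ
      rw [hdiff κ _ _ ht0 (by linarith) (by linarith), hval κ hκ _ (by linarith) (by linarith),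
        hval κ hκ _ (by linarith) (by linarith)]
      ring

lemma half_single (ν : Measure ℝ) [IsFiniteMeasure ν] [NullSingletonClass ν] : HalfP {ν} := by
  intro X hX
  have hint : ∀ a b : ℝ, IntervalIntegrable (fun _ : ℝ => (1:ℝ)) (ν.restrict X) a b := by
    intro a b
    exact (integrable_const (1:ℝ)).intervalIntegrable
  have hc : Continuous (fun s => ν.real (X ∩ Set.Iic s)) := by
    have e : ∀ s, ν.real (X ∩ Set.Iic s) =
        ν.real (X ∩ Set.Iic 0) + ∫ x in (0:ℝ)..s, (1:ℝ) ∂(ν.restrict X) := by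
      intro s
      have := intervalIntegral.integral_Iic_sub_Iic (f := fun _ : ℝ => (1:ℝ))
        (μ := ν.restrict X) (a := 0) (b := s) (integrable_const _).integrableOn
        (integrable_const _).integrableOn
      rw [← this]
      simp [Measure.real, Measure.restrict_apply, Set.inter_comm]
    rw [funext e]
    exact continuous_const.add (intervalIntegral.continuous_primitive hint 0)
  have ht : Filter.Tendsto (fun s => ν.real (X ∩ Set.Iic s)) Filter.atTop (nhds (ν.real X)) := by
    have := tendsto_measure_iUnion_atTop (μ := ν) (s := fun s : ℝ => X ∩ Set.Iic s)
      (fun a b hab => Set.inter_subset_inter_right _ (Set.Iic_subset_Iic.2 hab))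
    rw [← Set.inter_iUnion, Set.iUnion_Iic, Set.inter_univ] at this
    exact (ENNReal.tendsto_toReal (measure_ne_top _ _)).comp this
  have hb : Filter.Tendsto (fun s => ν.real (X ∩ Set.Iic s)) Filter.atBot (nhds 0) := by
    have := tendsto_measure_iInter_atBot (μ := ν) (s := fun s : ℝ => X ∩ Set.Iic s)
      (fun s => (hX.inter measurableSet_Iic).nullMeasurableSet)
      (fun a b hab => Set.inter_subset_inter_right _ (Set.Iic_subset_Iic.2 hab))
      ⟨0, measure_ne_top _ _⟩
    have e : (⋂ s : ℝ, X ∩ Set.Iic s) = ∅ := by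
      ext x
      simp only [Set.mem_iInter, Set.mem_inter_iff, Set.mem_Iic, Set.mem_empty_iff_false,
        iff_false, not_forall]
      exact ⟨x - 1, fun h => by linarith [h.2]⟩
    rw [e] at this
    have := (ENNReal.tendsto_toReal (measure_ne_top ν ∅)).comp this
    rw [measure_empty, ENNReal.toReal_zero] at this
    exact this
  rcases eq_or_lt_of_le (measureReal_nonneg (μ := ν) (s := X)) with h | h
  · refine ⟨∅, by simp, by simp, ?_⟩
    rintro μ rfl
    simp [← h]
  · obtain ⟨b, hb'⟩ := (ht.eventually (lt_mem_nhds (show ν.real X / 2 < ν.real X by linarith))).exists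
    obtain ⟨a, ha'⟩ := (hb.eventually (gt_mem_nhds (show 0 < ν.real X / 2 by linarith))).exists
    obtain ⟨s, hs⟩ := mem_range_of_exists_le_of_exists_ge hc ⟨a, ha'.le⟩ ⟨b, hb'.le⟩
    refine ⟨X ∩ Set.Iic s, Set.inter_subset_left, hX.inter measurableSet_Iic, ?_⟩
    rintro μ rfl
    exact hs

lemma fam_all {n : ℕ} (μ : Fin n → Measure ℝ) [∀ i, IsFiniteMeasure (μ i)]
    (ν : Measure ℝ) [IsFiniteMeasure ν] [NullSingletonClass ν] (hle : ∀ i, μ i ≤ ν) :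
    FamP (insert ν (Set.range μ)) := by
  classical
  have key : ∀ T : Finset (Fin n), FamP (insert ν (Set.image μ T)) := by
    intro T
    have hfin : ∀ T : Finset (Fin n), ∀ κ ∈ (insert ν (Set.image μ (T : Set (Fin n))) : Set (Measure ℝ)),
        IsFiniteMeasure κ := by
      rintro T κ (rfl | ⟨i, _, rfl⟩) <;> infer_instance
    induction T using Finset.induction_on with
    | empty =>
      have := half_fam {ν} (by rintro _ rfl; infer_instance) (half_single ν)
      simpa using this
    | insert a T ha ih =>
      apply half_fam _ (hfin _)
      have := fam_half _ (hfin T) ν (μ a) (by simp) (hle a) ih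
      rw [Set.insert_comm] at this
      rwa [Finset.coe_insert, Set.image_insert_eq]
  have := key Finset.univ
  simpa using this

lemma cake_partition {n : ℕ} (f : Fin n → ℝ → ℝ) (hf_nonneg : ∀ i x, 0 ≤ f i x)
    (hf_int : ∀ i, IntegrableOn (f i) (Set.Icc (0 : ℝ) 1))
    (x : Fin n → ℝ) (hx : ∀ i, 0 ≤ x i) (hx1 : ∑ i, x i = 1) :
    ∃ C : Fin n → Set ℝ, (∀ i, MeasurableSet (C i)) ∧
      (∀ i j, i ≠ j → Disjoint (C i) (C j)) ∧
      ((⋃ i, C i) = Set.Icc (0 : ℝ) 1) ∧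
      ∀ i j, ∫ y in C j, f i y = x j * ∫ y in Set.Icc (0:ℝ) 1, f i y := by
  classical
  let μ : Fin n → Measure ℝ := fun i =>
    (volume.restrict (Set.Icc (0:ℝ) 1)).withDensity (fun y => ENNReal.ofReal (f i y))
  have hfin : ∀ i, IsFiniteMeasure (μ i) := fun i =>
    isFiniteMeasure_withDensity_ofReal (hf_int i).2
  have hna : ∀ i, ∀ y, μ i {y} = 0 := fun i y =>
    withDensity_absolutelyContinuous _ _ (by simp)
  let ν : Measure ℝ := ∑ i, μ i
  have hνf : IsFiniteMeasure ν := by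
    constructor
    simp only [ν, Measure.finsetSum_apply]
    exact ENNReal.sum_lt_top.2 fun i _ => measure_lt_top _ _
  have hνa : NullSingletonClass ν := by
    constructor
    intro y
    simp [ν, Measure.finsetSum_apply, hna]
  have hle : ∀ i, μ i ≤ ν := by
    intro i
    apply Measure.le_iff.2
    intro s _
    simp only [ν, Measure.finsetSum_apply]
    exact Finset.single_le_sum (f := fun i => μ i s) (fun _ _ => zero_le) (Finset.mem_univ i)
  have hreal : ∀ i S, MeasurableSet S → S ⊆ Set.Icc (0:ℝ) 1 → (μ i).real S = ∫ y in S, f i y := by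
    intro i S hS hSub
    simp only [μ, Measure.real]
    rw [withDensity_apply _ hS, Measure.restrict_restrict hS, Set.inter_eq_left.2 hSub,
      integral_eq_lintegral_of_nonneg_ae (Filter.Eventually.of_forall (hf_nonneg i))
        ((hf_int i).mono_set hSub).1]
  obtain ⟨F, hmono, h0, h1, hmeas, hval⟩ := fam_all μ ν hle (Set.Icc 0 1) measurableSet_Icc
  let s : ℕ → ℝ := fun k => ∑ i : Fin n, if (i : ℕ) < k then x i else 0
  have hs0 : s 0 = 0 := by simp [s]
  have hsn : s n = 1 := by simp [s, hx1]
  have hsmono : Monotone s := by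
    intro a b hab
    apply Finset.sum_le_sum
    intro i _
    split_ifs with h1 h2
    · exact le_rfl
    · omega
    · exact hx i
    · exact le_rfl
  have hsnn : ∀ k, 0 ≤ s k := fun k => by
    have := hsmono (Nat.zero_le k); rwa [hs0] at this
  have hsle : ∀ k, k ≤ n → s k ≤ 1 := fun k hk => by
    have := hsmono hk; rwa [hsn] at this
  have hss : ∀ j : Fin n, s (j + 1) = s j + x j := by
    intro j
    have : ∀ i : Fin n, (if (i : ℕ) < j + 1 then x i else 0) =
        (if (i : ℕ) < j then x i else 0) + (if i = j then x i else 0) := by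
      intro i
      rcases lt_trichotomy (i : ℕ) j with h | h | h
      · have : i ≠ j := by rintro rfl; omega
        simp [h, this, Nat.lt_succ_of_lt h]
      · have : i = j := Fin.ext h
        simp [this]
      · have : i ≠ j := by rintro rfl; omega
        have h2 : ¬ (i : ℕ) < j + 1 := by omega
        have h3 : ¬ (i : ℕ) < j := by omega
        rw [if_neg h2, if_neg h3, if_neg this, add_zero]
    simp only [s, this, Finset.sum_add_distrib]
    simp
  have hG : ∀ a b, a ≤ b → b ≤ n → F (s a) ⊆ F (s b) := fun a b hab hb =>
    hmono _ _ (hsnn a) (hsmono hab) (hsle b hb)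
  refine ⟨fun j => F (s (j + 1)) \ F (s j), ?_, ?_, ?_, ?_⟩
  · intro j; exact (hmeas _).diff (hmeas _)
  · have aux : ∀ i j : Fin n, i < j → Disjoint (F (s (i + 1)) \ F (s i)) (F (s (j + 1)) \ F (s j)) := by
      intro i j hij
      rw [Set.disjoint_left]
      rintro y ⟨hy1, _⟩ ⟨_, hy2⟩
      exact hy2 (hG (i + 1) j (by have : (i : ℕ) < j := hij; omega) (by omega) hy1)
    intro i j hij
    rcases lt_or_gt_of_ne hij with h | h
    · exact aux i j h
    · exact (aux j i h).symm
  · ext y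
    simp only [Set.mem_iUnion]
    constructor
    · rintro ⟨j, hy, _⟩
      rw [← h1, ← hsn]
      exact hG (j + 1) n (by omega) le_rfl hy
    · intro hy
      have hy' : y ∈ F (s n) := by rw [hsn, h1]; exact hy
      have hex : ∃ k, y ∈ F (s k) := ⟨n, hy'⟩
      have hk := Nat.find_spec hex
      have hkn := Nat.find_min' hex hy'
      have hmin := fun m => Nat.find_min hex (m := m)
      generalize Nat.find hex = k at hk hkn hmin
      cases k with
      | zero => rw [hs0, h0] at hk; exact absurd hk (by simp)
      | succ k => exact ⟨⟨k, by omega⟩, hk, hmin k (by omega)⟩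
  · intro i j
    have hm : μ i ∈ insert ν (Set.range μ) := Or.inr ⟨i, rfl⟩
    have hsub : F (s j) ⊆ F (s (j + 1)) := hG _ _ (by omega) (by omega)
    rw [← hreal i _ ((hmeas _).diff (hmeas _)), ← hreal i _ measurableSet_Icc le_rfl,
      measureReal_sdiff hsub (hmeas _), hval _ hm _ (hsnn _) (hsle _ (by omega)),
      hval _ hm _ (hsnn _) (hsle _ (by omega)), hss]
    · ring
    · rw [← h1, ← hsn]
      exact Set.sdiff_subset.trans (hG (j + 1) n (by omega) le_rfl)

lemma exists_level {n : ℕ} (hn : 0 < n) (p : Fin n → ℝ) :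
    ∃ h : ℝ, ∑ i, max 0 (p i - h) = 1 := by
  have hc : Continuous (fun h : ℝ => ∑ i, max 0 (p i - h)) := by fun_prop
  have := mem_range_of_exists_le_of_exists_ge hc (c := 1) ⟨∑ i, |p i|, ?_⟩ ⟨p ⟨0, hn⟩ - 1, ?_⟩
  · exact this
  · have : ∀ i, max 0 (p i - ∑ i, |p i|) = 0 := by
      intro i
      apply max_eq_left
      have := Finset.single_le_sum (f := fun i => |p i|) (fun _ _ => abs_nonneg _)
        (Finset.mem_univ i)
      have h2 := le_abs_self (p i)
      linarith
    simp only [this]; simp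
  · have := Finset.single_le_sum (f := fun i => max 0 (p i - (p ⟨0, hn⟩ - 1)))
      (fun _ _ => le_max_left _ _) (Finset.mem_univ ⟨0, hn⟩)
    refine le_trans ?_ this
    simp

/-- With indivisible chores (every agent values every item strictly
negatively) and cake utilities given by nonnegative integrable
densities on `[0,1]`, an EFM allocation always exists. -/
theorem efm_exists_chores_and_cake
    (n : ℕ) (hn : 0 < n) (I : Type) [Fintype I] [DecidableEq I]
    (u : Fin n → I → ℝ)
    (f : Fin n → ℝ → ℝ)
    (hf_nonneg : ∀ i x, 0 ≤ f i x)
    (hf_int : ∀ i, IntegrableOn (f i) (Set.Icc (0 : ℝ) 1))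
    (hchores : ∀ (i : Fin n) (t : I), u i t < 0) :
    ∃ (A : Fin n → Finset I) (C : Fin n → Set ℝ),
      -- (A_1, …, A_n) is a partition of the items
      (∀ i j, i ≠ j → Disjoint (A i) (A j)) ∧
      (Finset.univ.biUnion A = Finset.univ) ∧
      -- (C_1, …, C_n) is a measurable partition of the cake [0,1]
      (∀ i, MeasurableSet (C i)) ∧
      (∀ i j, i ≠ j → Disjoint (C i) (C j)) ∧
      ((⋃ i, C i) = Set.Icc (0 : ℝ) 1) ∧
      -- EFM
      (∀ i j : Fin n,
        (∑ t ∈ A i, u i t) + (∫ x in C i, f i x) ≥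
            (∑ t ∈ A j, u i t) + (∫ x in C j, f i x) ∨
          ((∫ x in C j, f i x) = 0 ∧
            ∃ t ∈ A i ∪ A j,
              (∑ s ∈ (A i).erase t, u i s) ≥ ∑ s ∈ (A j).erase t, u i s)) := by
  classical
  set c : Fin n → ℝ := fun i => ∫ y in Set.Icc (0:ℝ) 1, f i y with hc
  have hc0 : ∀ i, 0 ≤ c i := fun i => integral_nonneg (hf_nonneg i)
  let d : Fin n → ℝ := fun i => if c i = 0 then 1 else c i
  have hd : ∀ i, 0 < d i := by
    intro i
    simp only [d]
    split_ifs with h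
    · exact one_pos
    · exact lt_of_le_of_ne (hc0 i) (Ne.symm h)
  obtain ⟨A, hAd, hAU, hAσ, hAE⟩ := chores_alloc hn (fun i t => u i t / d i)
    (fun i t => (div_neg_of_neg_of_pos (hchores i t) (hd i)).le)
  simp only [← Finset.sum_div] at hAσ hAE
  obtain ⟨p, hp⟩ := exists_potential
    (fun i j => (∑ t ∈ A j, u i t) / d i - (∑ t ∈ A i, u i t) / d i) (by simp) (by
      intro σ
      rw [Finset.sum_sub_distrib]
      linarith [hAσ σ])
  obtain ⟨h, hh⟩ := exists_level hn p
  obtain ⟨C, hCm, hCd, hCU, hCv⟩ := cake_partition f hf_nonneg hf_int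
    (fun i => max 0 (p i - h)) (fun i => le_max_left _ _) hh
  refine ⟨A, C, hAd, hAU, hCm, hCd, hCU, ?_⟩
  intro i j
  have hnn : 0 ≤ ∫ x in C i, f i x := integral_nonneg (hf_nonneg i)
  by_cases hz : (∫ x in C j, f i x) = 0
  · rcases hAE i j with h1 | ⟨l, hl, h1⟩
    · left
      rw [div_le_div_iff_of_pos_right (hd i)] at h1
      rw [hz]; linarith
    · right
      refine ⟨hz, l, Finset.mem_union_left _ hl, ?_⟩
      rw [div_le_div_iff_of_pos_right (hd i)] at h1
      by_cases hlj : l ∈ A j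
      · by_cases hij : i = j
        · subst hij; exact le_rfl
        · exact absurd hlj (Finset.disjoint_left.1 (hAd i j hij) hl)
      · rw [Finset.erase_eq_of_notMem hlj]; exact h1
  · left
    rw [hCv] at hz
    have hci : c i ≠ 0 := fun h' => hz (by rw [show (∫ y in Set.Icc (0:ℝ) 1, f i y) = 0 from h', mul_zero])
    have hpj : max 0 (p j - h) ≠ 0 := fun h' => hz (by rw [h', zero_mul])
    have hpj' : max 0 (p j - h) = p j - h := by
      rcases max_choice 0 (p j - h) with h' | h'
      · exact absurd h' hpj
      · exact h'
    have hpi : p i - h ≤ max 0 (p i - h) := le_max_right _ _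
    have hdc : d i = c i := by simp [d, hci]
    have hcp : 0 < c i := hdc ▸ hd i
    have h2 := hp i j
    rw [hdc] at h2
    rw [hCv, hCv]
    change _ + max 0 (p i - h) * c i ≥ _ + max 0 (p j - h) * c i
    rw [hpj']
    have h3 : (∑ t ∈ A j, u i t) / c i + (p j - h) ≤
        (∑ t ∈ A i, u i t) / c i + max 0 (p i - h) := by linarith
    have h4 := mul_le_mul_of_nonneg_right h3 hcp.le
    rw [add_mul, add_mul, div_mul_cancel₀ _ hci, div_mul_cancel₀ _ hci] at h4
    exact h4
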